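/- Let φ: [0,1] → ℝ be continuous and differentiable on (0,1), and assume the Löwner representation hypothesis with b > 0: a ∈ ℝ and μ is a Borel probability measure on [−1,1] such that φ'(x) = a + b ∫_{[−1,1]} (2x−1)/(1−λ(2x−1)) dμ(λ) for every x ∈ (0,1). If in addition φ' extends to a continuous function on [0,1] (equivalently, the one-sided limits lim_{x→0⁺} φ'(x) and lim_{x→1⁻} φ'(x) exist in ℝ), then ∫_{[1/2,1]} 1/(1−λ) dμ(λ) < ∞ and ∫_{[−1,−1/2]} 1/(1+λ) dμ(λ) < ∞. -/

import Mathlib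

/-!
With `t = 2x - 1`, the representation reads `(φ' x - a) / b = ∫ t / (1 - lt) dμ(l)`, and the left
side stays bounded on `(0,1)` because `φ'` extends continuously to the compact interval `[0,1]`.
Taking `t = s` or `t = -s` with `s ↑ 1`, the nonnegative functions `s / (1 - ls)` and `s / (1 + ls)`
converge to `1 / (1 - l)` and `1 / (1 + l)` respectively, so Fatou's lemma bounds the integrals of
the limits (`lintegral_le_of_bound`). Both endpoints are handled at once by a sign `e = ±1`.
-/


open MeasureTheory

/-- Fatou's lemma as `s ↑ 1`. At a point with `e * l = 1` the limit integrand takes the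
junk value `1 / 0 = 0`, so no convergence is needed there. -/
lemma lintegral_le_of_bound (μ : Measure ℝ) [IsProbabilityMeasure μ] (e C : ℝ) (he : |e| = 1)
    (hC : ∀ s ∈ Set.Ioo (0:ℝ) 1, ∫ l in Set.Icc (-1:ℝ) 1, s / (1 - e * l * s) ∂μ ≤ C) :
    ∫⁻ l in Set.Icc (-1:ℝ) 1, ENNReal.ofReal (1 / (1 - e * l)) ∂μ ≤ ENNReal.ofReal C := by
  have hel : ∀ l ∈ Set.Icc (-1:ℝ) 1, e * l ≤ 1 := by
    intro l hl
    have h1 : |e * l| ≤ 1 := by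
      rw [abs_mul, he, one_mul]
      exact abs_le.2 hl
    exact (abs_le.1 h1).2
  have hden : ∀ s ∈ Set.Ioo (0:ℝ) 1, ∀ l ∈ Set.Icc (-1:ℝ) 1, 0 < 1 - e * l * s := by
    intro s hs l hl
    nlinarith [mul_le_mul_of_nonneg_right (hel l hl) hs.1.le, hs.2]
  obtain ⟨u, -, hu, hulim⟩ := exists_seq_strictMono_tendsto' (zero_lt_one (α := ℝ))
  have hbound : ∀ n, ∫⁻ l in Set.Icc (-1:ℝ) 1, ENNReal.ofReal (u n / (1 - e * l * u n)) ∂μ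
      ≤ ENNReal.ofReal C := by
    intro n
    have hint : IntegrableOn (fun l => u n / (1 - e * l * u n)) (Set.Icc (-1:ℝ) 1) μ := by
      apply ContinuousOn.integrableOn_compact isCompact_Icc
      apply ContinuousOn.div (by fun_prop) (by fun_prop)
      intro l hl
      exact (hden _ (hu n) l hl).ne'
    rw [← ofReal_integral_eq_lintegral_ofReal hint]
    · exact ENNReal.ofReal_le_ofReal (hC _ (hu n))
    · filter_upwards [ae_restrict_mem measurableSet_Icc] with l hl
      exact div_nonneg (hu n).1.le (hden _ (hu n) l hl).le
  calc ∫⁻ l in Set.Icc (-1:ℝ) 1, ENNReal.ofReal (1 / (1 - e * l)) ∂μ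
      ≤ ∫⁻ l in Set.Icc (-1:ℝ) 1, Filter.liminf
          (fun n => ENNReal.ofReal (u n / (1 - e * l * u n))) Filter.atTop ∂μ := by
        apply lintegral_mono
        intro l
        by_cases hl : 1 - e * l = 0
        · simp [hl]
        · apply le_of_eq
          refine (Filter.Tendsto.liminf_eq (ENNReal.tendsto_ofReal ?_)).symm
          have h1 : Filter.Tendsto (fun n => 1 - e * l * u n) Filter.atTop
              (nhds (1 - e * l)) := by
            simpa using (hulim.const_mul (e * l)).const_sub 1
          exact hulim.div h1 hl
    _ ≤ Filter.liminf (fun n => ∫⁻ l in Set.Icc (-1:ℝ) 1,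
          ENNReal.ofReal (u n / (1 - e * l * u n)) ∂μ) Filter.atTop :=
        lintegral_liminf_le (fun n => by fun_prop)
    _ ≤ ENNReal.ofReal C := by
        refine (Filter.liminf_le_liminf (Filter.Eventually.of_forall hbound)).trans ?_
        simp

/-- If `φ` is continuous on `[0,1]`, differentiable on `(0,1)`, its derivative `φ'` admits a
Löwner representation with `b > 0` and `μ` a Borel probability measure on `[−1,1]`, and `φ'`
extends to a continuous function on `[0,1]`, then `∫_{[1/2,1]} 1/(1−λ) dμ(λ) < ∞` and
`∫_{[−1,−1/2]} 1/(1+λ) dμ(λ) < ∞`. -/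
theorem inv_integrable_of_loewner_rep_of_continuous_deriv
    (φ φ' : ℝ → ℝ) (a b : ℝ) (μ : Measure ℝ) [IsProbabilityMeasure μ]
    (hφc : ContinuousOn φ (Set.Icc (0:ℝ) 1))
    (hφd : ∀ x ∈ Set.Ioo (0:ℝ) 1, HasDerivAt φ (φ' x) x)
    (hb : 0 < b)
    (hμsupp : μ (Set.Icc (-1:ℝ) 1)ᶜ = 0)
    (hrep : ∀ x ∈ Set.Ioo (0:ℝ) 1,
      φ' x = a + b * ∫ l in Set.Icc (-1:ℝ) 1, (2*x - 1) / (1 - l*(2*x - 1)) ∂μ)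
    (hext : ∃ g : ℝ → ℝ, ContinuousOn g (Set.Icc (0:ℝ) 1) ∧
      ∀ x ∈ Set.Ioo (0:ℝ) 1, g x = φ' x) :
    (∫⁻ l in Set.Icc (1/2:ℝ) 1, ENNReal.ofReal (1 / (1 - l)) ∂μ) < ⊤ ∧
    (∫⁻ l in Set.Icc (-1:ℝ) (-1/2), ENNReal.ofReal (1 / (1 + l)) ∂μ) < ⊤ := by
  obtain ⟨g, hg, hgφ⟩ := hext
  obtain ⟨M, hM⟩ := isCompact_Icc.exists_bound_of_continuousOn hg
  have key : ∀ e : ℝ, |e| = 1 → ∫⁻ l in Set.Icc (-1:ℝ) 1, ENNReal.ofReal (1 / (1 - e * l)) ∂μ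
      ≤ ENNReal.ofReal ((M + |a|) / b) := by
    intro e he
    refine lintegral_le_of_bound μ e _ he fun s hs => ?_
    have hes : |e * s| < 1 := by
      rw [abs_mul, he, one_mul, abs_of_pos hs.1]
      exact hs.2
    have hx : (1 + e * s) / 2 ∈ Set.Ioo (0:ℝ) 1 := by
      constructor <;> linarith [(abs_lt.1 hes).1, (abs_lt.1 hes).2]
    have h1 := hrep _ hx
    rw [← hgφ _ hx] at h1
    have h2 := hM _ (Set.Ioo_subset_Icc_self hx)
    rw [Real.norm_eq_abs] at h2
    have h3 : ∫ l in Set.Icc (-1:ℝ) 1, (2 * ((1 + e * s) / 2) - 1) /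
        (1 - l * (2 * ((1 + e * s) / 2) - 1)) ∂μ
        = e * ∫ l in Set.Icc (-1:ℝ) 1, s / (1 - e * l * s) ∂μ := by
      rw [← integral_const_mul]
      congr 1 with l
      rw [← mul_div_assoc]
      congr 1 <;> ring
    rw [h3] at h1
    set I := ∫ l in Set.Icc (-1:ℝ) 1, s / (1 - e * l * s) ∂μ
    rw [le_div_iff₀ hb]
    calc I * b ≤ |I * b| := le_abs_self _
      _ = |b * (e * I)| := by
        rw [abs_mul, abs_mul, abs_mul, he]
        ring
      _ = |g ((1 + e * s) / 2) - a| := by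
        rw [h1]
        congr 1
        ring
      _ ≤ |g ((1 + e * s) / 2)| + |a| := abs_sub _ _
      _ ≤ M + |a| := by linarith
  constructor
  · refine lt_of_le_of_lt ?_ ((key 1 (by simp)).trans_lt ENNReal.ofReal_lt_top)
    simp only [one_mul]
    exact lintegral_mono_set (Set.Icc_subset_Icc (by norm_num) le_rfl)
  · refine lt_of_le_of_lt ?_ ((key (-1) (by simp)).trans_lt ENNReal.ofReal_lt_top)
    simp only [neg_mul, one_mul, sub_neg_eq_add]
    exact lintegral_mono_set (Set.Icc_subset_Icc le_rfl (by norm_num))
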